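/- arXiv:2502.14879 — 2 statements merged into one kernel-verified Lean document; each statement's English description precedes it below -/
import Mathlib

section
/- Let ▷ be a strict linear order on a finite nonempty set X. For a choice function c on X the following are equivalent: (i) there is a strict partial order > on X such that (>,▷) describes c as a shortlisting; (ii) there is an optimal attention filter Γ such that (Γ,▷) is an explanation by optimal limited attention of c. -/
/-!
Shortlisting by a strict partial order and optimal attention filters are the same thing: the
optimal attention filters are exactly the correspondences `A ↦ max(A, >)` with `>` a strict
partial order (on nonempty menus). Below, (a), (b), (c) are the three closure conditions of
`OptimalFilter`, in the order listed there.

That `max(·, >)` satisfies the filter conditions is direct; only (a) uses transitivity.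
Conversely, given `Γ`, put `x > y` when `x ≠ y` and `y ∉ Γ {x, y}` (`RevDom`). Condition (c),
iterated, says that attention survives passing to submenus (`OptimalFilter.mem_of_subset`), so an
element of `Γ A` is undominated in `A`; condition (b), iterated, gives the converse
(`OptimalFilter.mem_of_pairs`). Transitivity of `>` comes from (a) applied to the removal
of `y` from `{x, y, z}`.
-/

open Finset

variable {X : Type*} [DecidableEq X]

/-- `a` is the `r`-greatest element among those satisfying `P`. -/
def IsRMax (r : X → X → Prop) (P : X → Prop) (a : X) : Prop :=
  P a ∧ ∀ y, P y → y ≠ a → r a y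

/-- `a` is the `r`-least element among those satisfying `P`. -/
def IsRMin (r : X → X → Prop) (P : X → Prop) (a : X) : Prop :=
  P a ∧ ∀ y, P y → y ≠ a → r y a

def Asym (r : X → X → Prop) : Prop := ∀ x y, r x y → ¬ r y x

def StrictPartial (r : X → X → Prop) : Prop :=
  Asym r ∧ ∀ x y z, r x y → r y z → r x z

def StrictLinear (r : X → X → Prop) : Prop :=
  StrictPartial r ∧ ∀ x y : X, x ≠ y → r x y ∨ r y x

/-- No cycle `x₁ ≻ x₂ ≻ … ≻ xₙ ≻ x₁` with `n ≥ 3`. -/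
def Acyclic (r : X → X → Prop) : Prop :=
  ¬ ∃ (n : ℕ) (f : ℕ → X), 3 ≤ n ∧ (∀ i, i + 1 < n → r (f i) (f (i + 1))) ∧
    r (f (n - 1)) (f 0)

def ChoiceFun (c : Finset X → X) : Prop :=
  ∀ A : Finset X, A.Nonempty → c A ∈ A

def ChoiceCorr (Γ : Finset X → Finset X) : Prop :=
  ∀ A : Finset X, A.Nonempty → (Γ A).Nonempty ∧ Γ A ⊆ A

/-- `x ∈ max(A, r)`: `x` is in `A` and is undominated in `A` w.r.t. `r`. -/
def MaxOf (r : X → X → Prop) (A : Finset X) (x : X) : Prop :=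
  x ∈ A ∧ ∀ y ∈ A, ¬ r y x

/-- The pair `(gt, rhd)` describes `c` as a shortlisting. -/
def Describes (gt rhd : X → X → Prop) (c : Finset X → X) : Prop :=
  StrictPartial gt ∧ StrictLinear rhd ∧
    ∀ A : Finset X, A.Nonempty → IsRMax rhd (MaxOf gt A) (c A)

def Shortlisting (c : Finset X → X) : Prop :=
  ∃ gt rhd : X → X → Prop, Describes gt rhd c

/-- Optimal attention filter. -/
def OptimalFilter (Γ : Finset X → Finset X) : Prop :=
  ChoiceCorr Γ ∧
  (∀ B : Finset X, B.Nonempty → ∀ x ∈ B, x ∉ Γ B → Γ (B.erase x) ⊆ Γ B) ∧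
  (∀ B : Finset X, B.Nonempty → ∀ x ∈ B, ∀ y : X,
    y ∈ Γ {x, y} → y ∈ Γ (B.erase x) → y ∈ Γ B) ∧
  (∀ B : Finset X, B.Nonempty → ∀ x ∈ B, (B.erase x).Nonempty →
    (Γ B).erase x ⊆ Γ (B.erase x))

/-- `(Γ, rhd)` is an explanation by optimal limited attention of `c`. -/
def ExplByOLA (Γ : Finset X → Finset X) (rhd : X → X → Prop) (c : Finset X → X) : Prop :=
  OptimalFilter Γ ∧ StrictLinear rhd ∧
    ∀ A : Finset X, A.Nonempty → IsRMax rhd (· ∈ Γ A) (c A)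

/-- Choice with optimal limited attention. -/
def COLA (c : Finset X → X) : Prop :=
  ∃ (Γ : Finset X → Finset X) (rhd : X → X → Prop), ExplByOLA Γ rhd c

/-- Salient attention filter relative to `rhd`. -/
def SalientFilter (rhd : X → X → Prop) (Γ : Finset X → Finset X) : Prop :=
  ChoiceCorr Γ ∧
  ∀ B : Finset X, B.Nonempty → ∀ x ∈ B,
    ¬ IsRMin rhd (· ∈ B) x → ¬ IsRMax rhd (· ∈ Γ B) x →
      (Γ B).erase x = Γ (B.erase x)

/-- `(Γ, rhd)` is an explanation by salient limited attention of `c`. -/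
def ExplBySLA (Γ : Finset X → Finset X) (rhd : X → X → Prop) (c : Finset X → X) : Prop :=
  StrictLinear rhd ∧ SalientFilter rhd Γ ∧
    ∀ A : Finset X, A.Nonempty → IsRMax rhd (· ∈ Γ A) (c A)

/-- Choice with salient limited attention. -/
def CSLA (c : Finset X → X) : Prop :=
  ∃ (Γ : Finset X → Finset X) (rhd : X → X → Prop), ExplBySLA Γ rhd c

/-- Selective salient attention filter relative to `rhd`. -/
def SelectiveFilter (rhd : X → X → Prop) (Γ : Finset X → Finset X) : Prop :=
  ChoiceCorr Γ ∧
  ∀ B : Finset X, B.Nonempty → ∀ x ∈ B,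
    ¬ IsRMax rhd (· ∈ Γ B) x → (Γ B).erase x = Γ (B.erase x)

/-- Choice with selective salient limited attention. -/
def CSSLA (c : Finset X → X) : Prop :=
  ∃ (Γ : Finset X → Finset X) (rhd : X → X → Prop),
    StrictLinear rhd ∧ SelectiveFilter rhd Γ ∧
      ∀ A : Finset X, A.Nonempty → IsRMax rhd (· ∈ Γ A) (c A)

def Rationalizable (c : Finset X → X) : Prop :=
  ∃ rhd : X → X → Prop, StrictLinear rhd ∧
    ∀ A : Finset X, A.Nonempty → IsRMax rhd (· ∈ A) (c A)

/-- Competitive attention filter relative to `rhd`. -/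
def CompetitiveFilter (rhd : X → X → Prop) (Γ : Finset X → Finset X) : Prop :=
  ChoiceCorr Γ ∧
  (∀ A : Finset X, A.Nonempty → ∀ x ∈ A, x ∉ Γ A → Γ A = Γ (A.erase x)) ∧
  (∀ A : Finset X, 1 < A.card → ∀ x y : X,
    IsRMax rhd (· ∈ A) y → IsRMax rhd (· ∈ Γ (A.erase y)) x →
      (y ∈ Γ {x, y} ↔ y ∈ Γ A))

/-- `(Γ, rhd)` is an explanation by competitive limited attention of `c`. -/
def ExplByCCLA (Γ : Finset X → Finset X) (rhd : X → X → Prop) (c : Finset X → X) : Prop :=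
  StrictLinear rhd ∧ CompetitiveFilter rhd Γ ∧
    ∀ A : Finset X, A.Nonempty → IsRMax rhd (· ∈ Γ A) (c A)

/-- Choice with competitive limited attention. -/
def CCLA (c : Finset X → X) : Prop :=
  ∃ (Γ : Finset X → Finset X) (rhd : X → X → Prop), ExplByCCLA Γ rhd c

/-- The list `f` list rationalizes `c`. -/
def ListRationalizes (f : X → X → Prop) (c : Finset X → X) : Prop :=
  StrictLinear f ∧
    ∀ A : Finset X, 1 < A.card → ∀ l : X, IsRMax f (· ∈ A) l →
      c A = c {c (A.erase l), l}

def ListRational (c : Finset X → X) : Prop :=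
  ∃ f : X → X → Prop, ListRationalizes f c

/-- `(u, v, W)` is a general-temptation representation of `c`. -/
def GTRrep (c : Finset X → X) (u v : X → ℝ) (W : ℝ → ℝ → ℝ) : Prop :=
  (∀ r s : ℝ, 0 ≤ W r s) ∧
  (∀ r₁ r₂ s : ℝ, r₁ < r₂ → W r₁ s < W r₂ s) ∧
  (∀ r s₁ s₂ : ℝ, s₁ < s₂ → W r s₁ < W r s₂) ∧
  ∀ (A : Finset X) (hA : A.Nonempty),
    c A ∈ A ∧ ∀ x ∈ A, x ≠ c A →
      W (u x) (v x - A.sup' hA v) < W (u (c A)) (v (c A) - A.sup' hA v)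

def HasGTR (c : Finset X → X) : Prop :=
  ∃ (u v : X → ℝ) (W : ℝ → ℝ → ℝ), GTRrep c u v W

/-- `(gg, U)` is a conspicuity based endogenous reference representation of `c`. -/
def CERrep (c : Finset X → X) (gg : X → X → Prop) (U : X → X → ℝ) : Prop :=
  StrictLinear gg ∧ (∀ z : X, Function.Injective (U z)) ∧
  ∀ A : Finset X, A.Nonempty → ∀ m : X, IsRMax gg (· ∈ A) m →
    c A ∈ A ∧ ∀ x ∈ A, x ≠ c A → U m x < U m (c A)

def HasCER (c : Finset X → X) : Prop :=
  ∃ (gg : X → X → Prop) (U : X → X → ℝ), CERrep c gg U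

/-- `(A, B)` is a switch of `c`. -/
def Switch (c : Finset X → X) (A B : Finset X) : Prop :=
  A.Nonempty ∧ A ⊆ B ∧ c B ∈ A ∧ c A ≠ c B

/-- Revealed salience: `x ⊨_c y`. -/
def RevSal (c : Finset X → X) (x y : X) : Prop :=
  ∃ A : Finset X, x ∈ A ∧ y ∈ A ∧ x ≠ c A ∧ c (A.erase x) ≠ c A

/-- Axiom of Revealed Temptation. -/
def ART (c : Finset X → X) : Prop :=
  ∀ B : Finset X, B.Nonempty → ∃ x ∈ B,
    ∀ B' B'' : Finset X, x ∈ B' → B' ⊂ B'' → B'' ⊆ B → ¬ Switch c B' B''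

/-- The revealed relation `R^c`. -/
def Rrel (c : Finset X → X) (x y : X) : Prop :=
  (∃ A : Finset X, A.Nonempty ∧ x = c (insert y A) ∧ x ≠ c A) ∨
  (∃ A : Finset X, A.Nonempty ∧ y = c (insert x A) ∧ x = c {x, y}) ∨
  (∃ A : Finset X, A.Nonempty ∧ y ≠ c (insert x A) ∧ y = c {x, y} ∧ y = c A)

/-- The revealed-to-follow relation `F_c`. -/
def Frel (c : Finset X → X) (x y : X) : Prop :=
  (∃ A : Finset X, A.Nonempty ∧ x = c (insert y A) ∧ y = c {x, y}) ∨
  (∃ A : Finset X, A.Nonempty ∧ x = c (insert y A) ∧ x ≠ c A) ∨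
  (∃ A : Finset X, A.Nonempty ∧ x ≠ c (insert y A) ∧ x = c {x, y} ∧ x = c A)

/-- The domination relation revealed by `Γ`: `x` draws attention away from `y` in the menu
`{x, y}`. -/
def RevDom (Γ : Finset X → Finset X) (x y : X) : Prop := x ≠ y ∧ y ∉ Γ {x, y}

lemma OptimalFilter.mem_of_subset {Γ : Finset X → Finset X} (h : OptimalFilter Γ)
    {A : Finset X} (B : Finset X) (hAB : A ⊆ B) {y : X} (hyA : y ∈ A) (hy : y ∈ Γ B) :
    y ∈ Γ A := by
  induction B using Finset.strongInduction with
  | H B ih =>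
    by_cases hBA : B ⊆ A
    · rwa [Finset.Subset.antisymm hAB hBA]
    · obtain ⟨x, hxB, hxA⟩ := Finset.not_subset.mp hBA
      have hyx : y ≠ x := fun e => hxA (e ▸ hyA)
      have hyB : y ∈ B.erase x := Finset.mem_erase.mpr ⟨hyx, hAB hyA⟩
      exact ih _ (Finset.erase_ssubset hxB)
        (fun a ha => Finset.mem_erase.mpr ⟨fun e => hxA (e ▸ ha), hAB ha⟩)
        (h.2.2.2 B ⟨x, hxB⟩ x hxB ⟨y, hyB⟩ (Finset.mem_erase.mpr ⟨hyx, hy⟩))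

lemma OptimalFilter.mem_of_pairs {Γ : Finset X → Finset X} (h : OptimalFilter Γ)
    (A : Finset X) {y : X} (hyA : y ∈ A) (hy : ∀ x ∈ A, x ≠ y → y ∈ Γ {x, y}) :
    y ∈ Γ A := by
  induction A using Finset.strongInduction with
  | H A ih =>
    by_cases hx : ∃ x ∈ A, x ≠ y
    · obtain ⟨x, hxA, hxy⟩ := hx
      exact h.2.2.1 A ⟨x, hxA⟩ x hxA y (hy x hxA hxy)
        (ih _ (Finset.erase_ssubset hxA) (Finset.mem_erase.mpr ⟨hxy.symm, hyA⟩)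
          fun z hz => hy z (Finset.mem_of_mem_erase hz))
    · push Not at hx
      obtain ⟨⟨z, hz⟩, hsub⟩ := h.1 A ⟨y, hyA⟩
      exact hx z (hsub hz) ▸ hz

lemma OptimalFilter.mem_iff_maxOf {Γ : Finset X → Finset X} (h : OptimalFilter Γ)
    {A : Finset X} (hA : A.Nonempty) (y : X) : y ∈ Γ A ↔ MaxOf (RevDom Γ) A y := by
  constructor
  · intro hy
    have hyA := (h.1 A hA).2 hy
    exact ⟨hyA, fun x hx hxy =>
      hxy.2 (h.mem_of_subset A (by simp [Finset.insert_subset_iff, hx, hyA]) (by simp) hy)⟩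
  · rintro ⟨hyA, hmax⟩
    exact h.mem_of_pairs A hyA fun x hx hxy => by
      by_contra hn
      exact hmax x hx ⟨hxy, hn⟩

lemma OptimalFilter.strictPartial_revDom {Γ : Finset X → Finset X} (h : OptimalFilter Γ) :
    StrictPartial (RevDom Γ) := by
  have hasym : Asym (RevDom Γ) := by
    rintro x y ⟨-, hy⟩ ⟨-, hx⟩
    rw [Finset.pair_comm] at hx
    obtain ⟨⟨z, hz⟩, hsub⟩ := h.1 {x, y} (by simp)
    have := hsub hz
    simp only [Finset.mem_insert, Finset.mem_singleton] at this
    rcases this with rfl | rfl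
    · exact hx hz
    · exact hy hz
  refine ⟨hasym, fun x y z hxy hyz => ?_⟩
  have hxz : x ≠ z := by
    rintro rfl
    exact hasym _ _ hxy hyz
  refine ⟨hxz, fun hz => ?_⟩
  have hyB : y ∉ Γ {x, y, z} := fun hy =>
    hxy.2 (h.mem_of_subset _ (by grind) (by simp) hy)
  have hzB : z ∉ Γ {x, y, z} := fun hz =>
    hyz.2 (h.mem_of_subset _ (by grind) (by simp) hz)
  have he : ({x, y, z} : Finset X).erase y = {x, z} := by
    have := hxy.1
    have := hyz.1
    grind
  -- `y` is ignored in `{x, y, z}`, so by (a) whatever is noticed in `{x, z}` is noticed there.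
  have hsub := h.2.1 {x, y, z} (by simp) y (by simp) hyB
  rw [he] at hsub
  exact hzB (hsub hz)

open Classical in
lemma optimalFilter_max {gt : X → X → Prop} (hgt : StrictPartial gt)
    (hne : ∀ A : Finset X, A.Nonempty → ∃ x, MaxOf gt A x) :
    OptimalFilter fun A => A.filter (MaxOf gt A) := by
  obtain ⟨hasym, htrans⟩ := hgt
  refine ⟨fun A hA => ⟨?_, Finset.filter_subset _ _⟩, ?_, ?_, ?_⟩
  · obtain ⟨x, hx⟩ := hne A hA
    exact ⟨x, Finset.mem_filter.mpr ⟨hx.1, hx⟩⟩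
  · intro B _ x hx hxB y hy
    simp only [Finset.mem_filter, MaxOf, Finset.mem_erase] at hxB hy ⊢
    obtain ⟨⟨hyx, hyB⟩, -, hy⟩ := hy
    -- A dominator `z` of `x` would also dominate anything that `x` dominates.
    obtain ⟨z, hzB, hzx⟩ : ∃ z ∈ B, gt z x := by
      by_contra! hn
      exact hxB ⟨hx, hx, hn⟩
    have hne : z ≠ x := by
      rintro rfl
      exact hasym _ _ hzx hzx
    refine ⟨hyB, hyB, fun w hw hwy => ?_⟩
    by_cases hwx : w = x
    · subst hwx
      exact hy z ⟨hne, hzB⟩ (htrans _ _ _ hzx hwy)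
    · exact hy w ⟨hwx, hw⟩ hwy
  · intro B _ x hx y hxy hy
    simp only [Finset.mem_filter, MaxOf, Finset.mem_erase] at hxy hy ⊢
    refine ⟨hy.1.2, hy.1.2, fun w hw hwy => ?_⟩
    by_cases hwx : w = x
    · subst hwx
      exact hxy.2.2 w (by simp) hwy
    · exact hy.2.2 w ⟨hwx, hw⟩ hwy
  · intro B _ x _ _ y hy
    simp only [Finset.mem_filter, MaxOf, Finset.mem_erase] at hy ⊢
    exact ⟨⟨hy.1, hy.2.1⟩, ⟨hy.1, hy.2.1⟩, fun w hw => hy.2.2.2 w hw.2⟩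

theorem stmt_4 [Fintype X] [Nonempty X] (rhd : X → X → Prop) (hrhd : StrictLinear rhd)
    (c : Finset X → X) (hc : ChoiceFun c) :
    (∃ gt : X → X → Prop, Describes gt rhd c) ↔
      (∃ Γ : Finset X → Finset X, ExplByOLA Γ rhd c) := by
  classical
  constructor
  · rintro ⟨gt, hgt, -, hmax⟩
    refine ⟨fun A => A.filter (MaxOf gt A),
      optimalFilter_max hgt fun A hA => ⟨c A, (hmax A hA).1⟩, hrhd, fun A hA => ?_⟩
    obtain ⟨h1, h2⟩ := hmax A hA
    exact ⟨Finset.mem_filter.mpr ⟨h1.1, h1⟩, fun y hy => h2 y (Finset.mem_filter.mp hy).2⟩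
  · rintro ⟨Γ, hΓ, -, hmax⟩
    refine ⟨RevDom Γ, hΓ.strictPartial_revDom, hrhd, fun A hA => ?_⟩
    obtain ⟨h1, h2⟩ := hmax A hA
    exact ⟨(hΓ.mem_iff_maxOf hA _).mp h1, fun y hy => h2 y ((hΓ.mem_iff_maxOf hA y).mpr hy)⟩
end

section
/- A choice function c on a finite nonempty set X is list rational if and only if it is a choice with competitive limited attention. -/
/-!
The list and the preference can be taken to be the same linear order.

If `(Γ, ▷)` explains `c` by competitive limited attention, let `l` be the `▷`-maximum of `A` and
`x = c (A \ {l})`. If `l ∈ Γ A`, then `l ∈ Γ {x, l}` by the competition property, and `l` is chosen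
from both menus; otherwise `l` is ignored in both menus, and both choices are `x`. So `▷` list
rationalizes `c` (`list_of_ccla`).

Conversely, if the list `f` rationalizes `c`, let `Γ A` consist of `c A` and of the alternatives of
`A` that come before `c A` in the list. Then `c A` is the `f`-maximum of `Γ A`. The alternatives
outside `Γ A` come after `c A`, and deleting them changes neither the choice
(`choice_erase_of_later`) nor, therefore, `Γ`. The competition property is the list recursion
itself, since the last alternative of `A` lies in `Γ A` exactly when it is chosen (`ccla_of_list`).
-/

open Finset

variable {X : Type*} [DecidableEq X]

theorem exists_isRMax {r : X → X → Prop} (hr : StrictLinear r) (A : Finset X)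
    (hA : A.Nonempty) : ∃ l, IsRMax r (· ∈ A) l := by
  induction hA using Finset.Nonempty.cons_induction with
  | singleton a => exact ⟨a, by simp, by simp⟩
  | cons a s ha hs ih =>
    obtain ⟨l, hl, hmax⟩ := ih
    have hne : l ≠ a := fun h => ha (h ▸ hl)
    obtain ⟨⟨-, htr⟩, htot⟩ := hr
    rcases htot l a hne with h | h
    · refine ⟨l, by simp [hl], fun y hy hyl => ?_⟩
      rcases Finset.mem_cons.1 hy with rfl | hy
      · exact h
      · exact hmax y hy hyl
    · refine ⟨a, by simp, fun y hy hya => ?_⟩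
      have hys : y ∈ s := (Finset.mem_cons.1 hy).resolve_left hya
      by_cases hyl : y = l
      · exact hyl ▸ h
      · exact htr _ _ _ h (hmax y hys hyl)

theorem choice_erase_last {c : Finset X → X} (hc : ChoiceFun c) {f : X → X → Prop}
    (hf : ListRationalizes f c) {A : Finset X} (hA : 1 < A.card) {l : X}
    (hl : IsRMax f (· ∈ A) l) (hne : c A ≠ l) : c (A.erase l) = c A := by
  have h := hc {c (A.erase l), l} (by simp)
  rw [← hf.2 A hA l hl] at h
  simp only [Finset.mem_insert, Finset.mem_singleton] at h
  exact (h.resolve_right hne).symm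

/-- Deleting an alternative that comes after the chosen one in the list does not affect the
choice. The induction on the size of the menu peels off its last alternative. -/
theorem choice_erase_of_later {c : Finset X → X} (hc : ChoiceFun c) {f : X → X → Prop}
    (hf : ListRationalizes f c) {A : Finset X} {x : X} (hx : x ∈ A) (hxc : f x (c A)) :
    c (A.erase x) = c A := by
  induction A using Finset.strongInduction with
  | H A ih =>
    obtain ⟨⟨has, htr⟩, -⟩ := hf.1
    have hcA : c A ∈ A := hc A ⟨x, hx⟩
    have hxne : x ≠ c A := fun h => has _ _ hxc (by rwa [← h] at hxc ⊢)
    have hcard : 1 < A.card := Finset.one_lt_card.2 ⟨x, hx, c A, hcA, hxne⟩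
    obtain ⟨l, hl⟩ := exists_isRMax hf.1 A ⟨x, hx⟩
    by_cases hxl : x = l
    · subst hxl
      exact choice_erase_last hc hf hcard hl hxne.symm
    · have hlc : f l (c A) := htr _ _ _ (hl.2 x hx hxl) hxc
      have hlne : c A ≠ l := fun h => has _ _ hlc (by rwa [h] at hlc ⊢)
      have hlast := choice_erase_last hc hf hcard hl hlne
      have hih : c ((A.erase l).erase x) = c (A.erase l) :=
        ih _ (Finset.erase_ssubset hl.1) (Finset.mem_erase.2 ⟨hxl, hx⟩) (by rwa [hlast])
      have hl' : IsRMax f (· ∈ A.erase x) l :=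
        ⟨Finset.mem_erase.2 ⟨Ne.symm hxl, hl.1⟩,
          fun y hy hyl => hl.2 y (Finset.mem_of_mem_erase hy) hyl⟩
      have hcard' : 1 < (A.erase x).card :=
        Finset.one_lt_card.2 ⟨l, hl'.1, c A, Finset.mem_erase.2 ⟨hxne.symm, hcA⟩, hlne.symm⟩
      rw [hf.2 _ hcard' l hl', Finset.erase_right_comm, hih, ← hf.2 A hcard l hl]

theorem isRMax_unique {r : X → X → Prop} (hr : Asym r) {P : X → Prop} {a b : X}
    (ha : IsRMax r P a) (hb : IsRMax r P b) : a = b := by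
  by_contra h
  exact hr _ _ (ha.2 b hb.1 (Ne.symm h)) (hb.2 a ha.1 h)

open Classical in
/-- The filter built from a list `f`: the chosen alternative together with everything in the menu
that comes before it in the list. -/
noncomputable def listFilter (f : X → X → Prop) (c : Finset X → X) (A : Finset X) : Finset X :=
  A.filter fun x => x = c A ∨ f (c A) x

theorem mem_listFilter {f : X → X → Prop} {c : Finset X → X} {A : Finset X} {x : X} :
    x ∈ listFilter f c A ↔ x ∈ A ∧ (x = c A ∨ f (c A) x) := by
  simp [listFilter]

theorem isRMax_listFilter {f : X → X → Prop} {c : Finset X → X} (hc : ChoiceFun c)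
    {A : Finset X} (hA : A.Nonempty) : IsRMax f (· ∈ listFilter f c A) (c A) :=
  ⟨mem_listFilter.2 ⟨hc A hA, Or.inl rfl⟩,
    fun _ hy hne => (mem_listFilter.1 hy).2.resolve_left hne⟩

theorem last_mem_listFilter {f : X → X → Prop} (hf : Asym f) {c : Finset X → X}
    (hc : ChoiceFun c) {A : Finset X} {l : X} (hl : IsRMax f (· ∈ A) l) :
    l ∈ listFilter f c A ↔ l = c A := by
  rw [mem_listFilter]
  refine ⟨fun h => ?_, fun h => ⟨hl.1, Or.inl h⟩⟩
  by_contra hne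
  exact hf _ _ (h.2.resolve_left hne) (hl.2 _ (hc A ⟨l, hl.1⟩) (Ne.symm hne))

theorem ccla_of_list {c : Finset X → X} (hc : ChoiceFun c) {f : X → X → Prop}
    (hf : ListRationalizes f c) : CCLA c := by
  obtain ⟨⟨has, htr⟩, htot⟩ := hf.1
  refine ⟨listFilter f c, f, hf.1, ⟨fun A hA => ?_, fun A hA x hx hxn => ?_,
    fun A hA x y hy hx => ?_⟩, fun A hA => isRMax_listFilter hc hA⟩
  · exact ⟨⟨c A, (isRMax_listFilter hc hA).1⟩, fun x hx => (mem_listFilter.1 hx).1⟩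
  · have hxn' : ¬ (x = c A ∨ f (c A) x) := fun h => hxn (mem_listFilter.2 ⟨hx, h⟩)
    have hlater : f x (c A) := by
      rcases htot x (c A) (fun h => hxn' (Or.inl h)) with h | h
      · exact h
      · exact absurd (Or.inr h) hxn'
    ext z
    rw [mem_listFilter, mem_listFilter, choice_erase_of_later hc hf hx hlater, Finset.mem_erase]
    refine ⟨fun h => ⟨⟨?_, h.1⟩, h.2⟩, fun h => ⟨h.1.2, h.2⟩⟩
    rintro rfl
    exact hxn' h.2
  · have hne : (A.erase y).Nonempty := by
      rw [← Finset.card_pos, Finset.card_erase_of_mem hy.1]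
      omega
    obtain rfl : x = c (A.erase y) := isRMax_unique has hx (isRMax_listFilter hc hne)
    have hmem := Finset.mem_erase.1 (hc _ hne)
    have hy' : IsRMax f (· ∈ ({c (A.erase y), y} : Finset X)) y := by
      refine ⟨by simp, fun z hz hzy => ?_⟩
      obtain rfl : z = c (A.erase y) := by simpa [hzy] using hz
      exact hy.2 _ hmem.2 hzy
    rw [last_mem_listFilter has hc hy, last_mem_listFilter has hc hy', ← hf.2 A hA y hy]

theorem list_of_ccla {c : Finset X → X} (hc : ChoiceFun c) {Γ : Finset X → Finset X}
    {rhd : X → X → Prop} (h : ExplByCCLA Γ rhd c) : ListRationalizes rhd c := by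
  obtain ⟨hlin, ⟨hcorr, hignore, hcomp⟩, hmax⟩ := h
  refine ⟨hlin, fun A hA l hl => ?_⟩
  have has := hlin.1.1
  have hne : (A.erase l).Nonempty := by
    rw [← Finset.card_pos, Finset.card_erase_of_mem hl.1]
    omega
  have hneA : A.Nonempty := ⟨l, hl.1⟩
  obtain ⟨hxl, hxA⟩ := Finset.mem_erase.1 (hc _ hne)
  have key := hcomp A hA _ l hl (hmax _ hne)
  set x := c (A.erase l) with hx
  have hpair : ({x, l} : Finset X).Nonempty := by simp
  by_cases hlA : l ∈ Γ A
  · have h1 : c A = l := isRMax_unique has (hmax A hneA)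
      ⟨hlA, fun y hy hyl => hl.2 y ((hcorr A hneA).2 hy) hyl⟩
    have h2 : c {x, l} = l := isRMax_unique has (hmax _ hpair)
      ⟨key.2 hlA, fun y hy hyl => by
        obtain rfl : y = x := by simpa [hyl] using (hcorr _ hpair).2 hy
        exact hl.2 _ hxA hyl⟩
    rw [h1, h2]
  · have h1 : c A = x := by
      have := hmax A hneA
      rw [hignore A hneA l hl.1 hlA] at this
      exact isRMax_unique has this (hmax _ hne)
    have h2 : c {x, l} = x := by
      have hmem : c {x, l} ∈ Γ {x, l} := (hmax _ hpair).1
      have hsub : c {x, l} ≠ l := fun h => by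
        rw [h] at hmem
        exact hlA (key.1 hmem)
      simpa [hsub] using hc _ hpair
    rw [h1, h2]

theorem stmt_11 [Fintype X] [Nonempty X] (c : Finset X → X) (hc : ChoiceFun c) :
    ListRational c ↔ CCLA c := by
  constructor
  · rintro ⟨f, hf⟩
    exact ccla_of_list hc hf
  · rintro ⟨Γ, rhd, h⟩
    exact ⟨rhd, list_of_ccla hc h⟩
end
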